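/- arXiv:0807.0595 — 4 statements merged into one kernel-verified Lean document; each statement's English description precedes it below -/
import Mathlib

section
/- Let q be a prime power, let ξ ∈ GF(q^m)* have multiplicative order n and degree m over GF(q), and let C = C(n,q,{ξ}) be the cyclic code of length n over GF(q) with defining zero ξ. A permutation π of {0, 1, …, n−1} is a permutation automorphism of C if and only if there exists a q-polynomial L(x) = L_0 x + L_1 x^q + ⋯ + L_{m−1} x^{q^{m−1}} with coefficients in GF(q^m) such that L(ξ^i) = ξ^{π(i)} for all i = 0, …, n−1. -/
open Polynomial

/-- The subgroup `⟨ξ⟩ = {1, ξ, ξ², …}` of powers of an element `ξ`. -/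
def powersOf {E : Type*} [Monoid E] (ξ : E) : Set E := {x | ∃ k : ℕ, x = ξ ^ k}

/-- The map `x ↦ L₀x + L₁x^q + ⋯ + L_{m-1}x^{q^{m-1}}` given by the `q`-polynomial
with coefficient vector `c`. -/
def qPolyMap {E : Type*} [Field E] (q : ℕ) {m : ℕ} (c : Fin m → E) (x : E) : E :=
  ∑ i : Fin m, c i * x ^ q ^ (i : ℕ)

/-- `u` is a linear recurring sequence (an `f`-sequence) with characteristic polynomial
`f = xᵐ - σ_{m-1}x^{m-1} - ⋯ - σ₀`, i.e. `u_{k+m} = σ_{m-1}u_{k+m-1} + ⋯ + σ₀u_k`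
where `σᵢ = -(f.coeff i)`. -/
def IsLRS {F E : Type*} [Field F] [Field E] [Algebra F E] (f : Polynomial F) (u : ℕ → E) : Prop :=
  ∀ k : ℕ, u (k + f.natDegree) =
    ∑ i ∈ Finset.range f.natDegree, algebraMap F E (-(f.coeff i)) * u (k + i)

/-- The `q`-order of `ξ` over `F`: the least `d > 0` with `ξ ^ d ∈ F`. -/
noncomputable def qOrder (F : Type*) {E : Type*} [Field F] [Field E] [Algebra F E] (ξ : E) : ℕ :=
  sInf {d : ℕ | 0 < d ∧ ξ ^ d ∈ Set.range (algebraMap F E)}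

/-- `ξ` is nonstandard of degree `m` over `F`: its minimal polynomial `f` over `F` has
degree `m`, and `⟨ξ⟩` can be generated by an `f`-sequence `u` of smallest period `|⟨ξ⟩|`
with `u 0 = 1` and `(u_0, …, u_{m-1}) ≠ (1, ζ, …, ζ^{m-1})` for every zero `ζ` of `f`. -/
def IsNonstandard (F : Type*) {E : Type*} [Field F] [Field E] [Algebra F E]
    (m : ℕ) (ξ : E) : Prop :=
  (minpoly F ξ).natDegree = m ∧
  ∃ u : ℕ → E, IsLRS (minpoly F ξ) u ∧
    IsLeast {p : ℕ | 0 < p ∧ ∀ k, u (k + p) = u k} (orderOf ξ) ∧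
    Set.range u = powersOf ξ ∧
    u 0 = 1 ∧
    ∀ ζ : E, (aeval ζ) (minpoly F ξ) = 0 → ∃ i : Fin m, u (i : ℕ) ≠ ζ ^ (i : ℕ)

/-- The span of `ξ ^ i`, `i < orderOf ξ`, is everything when `ξ` has full degree. -/
theorem span_range_pow_eq_top {F E : Type*} [Field F] [Field E] [Algebra F E]
    [FiniteDimensional F E] {n : ℕ} {ξ : E}
    (hdeg : (minpoly F ξ).natDegree = Module.finrank F E)
    (hn : orderOf ξ = n) (hpos : 0 < n) :
    Submodule.span F (Set.range fun i : Fin n => ξ ^ (i : ℕ)) = ⊤ := by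
  rw [← Field.primitive_element_iff_minpoly_natDegree_eq] at hdeg
  refine eq_top_iff.mpr fun x _ => ?_
  have hx : x ∈ (IntermediateField.adjoin F {ξ}).toSubalgebra := by simp [hdeg]
  rw [IntermediateField.adjoin_simple_toSubalgebra_of_isAlgebraic
    (Algebra.IsAlgebraic.isAlgebraic ξ), Algebra.adjoin_singleton_eq_range_aeval] at hx
  obtain ⟨p, rfl⟩ := hx
  change aeval ξ p ∈ _
  rw [aeval_eq_sum_range]
  refine Submodule.sum_mem _ fun k _ => Submodule.smul_mem _ _ (Submodule.subset_span ?_)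
  refine ⟨⟨k % n, Nat.mod_lt _ hpos⟩, ?_⟩
  simp only [← hn, pow_mod_orderOf]

/-- Every relation among the spanning family `v` holds for `w` iff `v i ↦ w i` extends
linearly. -/
theorem exists_linearMap_apply_eq_iff {F V W ι : Type*} [Field F] [AddCommGroup V] [Module F V]
    [AddCommGroup W] [Module F W] [Fintype ι] {v : ι → V} (w : ι → W)
    (hv : Submodule.span F (Set.range v) = ⊤) :
    (∃ T : V →ₗ[F] W, ∀ i, T (v i) = w i) ↔
      ∀ c : ι → F, ∑ i, c i • v i = 0 → ∑ i, c i • w i = 0 := by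
  classical
  constructor
  · rintro ⟨T, hT⟩ c hc
    simpa [hT] using congrArg T hc
  · intro h
    obtain ⟨g, hg⟩ := (Fintype.linearCombination F v).exists_rightInverse_of_surjective
      (by rw [Fintype.range_linearCombination, hv])
    refine ⟨Fintype.linearCombination F w ∘ₗ g, fun i => ?_⟩
    have hgi := LinearMap.congr_fun hg (v i)
    have key := h (g (v i) - Pi.single i 1) (by
      have : Fintype.linearCombination F v (g (v i) - Pi.single i 1) = 0 := by
        rw [map_sub, Fintype.linearCombination_apply_single, one_smul]
        exact sub_eq_zero.mpr hgi
      simpa only [Fintype.linearCombination_apply] using this)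
    rw [← Fintype.linearCombination_apply, map_sub, Fintype.linearCombination_apply_single,
      one_smul, sub_eq_zero] at key
    exact key

/-- A linear map permuting a spanning family is invertible, and its inverse realizes the
inverse permutation. -/
theorem exists_linearMap_perm_symm {F V ι : Type*} [Field F] [AddCommGroup V] [Module F V]
    [FiniteDimensional F V] {v : ι → V} (hv : Submodule.span F (Set.range v) = ⊤)
    (σ : Equiv.Perm ι) (h : ∃ T : V →ₗ[F] V, ∀ i, T (v i) = v (σ i)) :
    ∃ T : V →ₗ[F] V, ∀ i, T (v i) = v (σ.symm i) := by
  obtain ⟨T, hT⟩ := h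
  have hsurj : Function.Surjective T := by
    rw [← LinearMap.range_eq_top, eq_top_iff, ← hv, Submodule.span_le]
    rintro _ ⟨i, rfl⟩
    exact ⟨v (σ.symm i), by simp [hT]⟩
  have hbij : Function.Bijective T := ⟨LinearMap.injective_iff_surjective.mpr hsurj, hsurj⟩
  refine ⟨(LinearEquiv.ofBijective T hbij).symm, fun i => ?_⟩
  rw [LinearEquiv.coe_coe, LinearEquiv.symm_apply_eq]
  simp [hT]

/-- The maps given by `q`-polynomials are exactly the `F`-linear endomorphisms. -/
theorem exists_linearMap_coe_eq_iff_qPolyMap {F E : Type*} [Field F] [Fintype F] [Field E]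
    [Finite E] [Algebra F E] (f : E → E) :
    (∃ T : E →ₗ[F] E, ⇑T = f) ↔
      ∃ L : Fin (Module.finrank F E) → E, qPolyMap (Fintype.card F) L = f := by
  let φ : Fin (Module.finrank F E) → E →ₗ[F] E :=
    fun i => (FiniteField.frobeniusAlgHom F E ^ (i : ℕ)).toLinearMap
  have hφ : ∀ L : Fin (Module.finrank F E) → E,
      ⇑(∑ i, L i • φ i) = qPolyMap (Fintype.card F) L := by
    intro L
    ext x
    simp [φ, qPolyMap, FiniteField.coe_frobeniusAlgHom, pow_iterate]
  have hli : LinearIndependent E φ := (linearIndependent_algHom_toLinearMap F E E).comp _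
    (FiniteField.bijective_frobeniusAlgHom_pow F E).injective
  have hspan := hli.span_eq_top_of_card_eq_finrank' (by
    rw [Module.finrank_linearMap_self, Fintype.card_fin])
  constructor
  · rintro ⟨T, rfl⟩
    obtain ⟨L, hL⟩ := (Submodule.mem_span_range_iff_exists_fun E).mp
      (hspan ▸ Submodule.mem_top : T ∈ Submodule.span E (Set.range φ))
    exact ⟨L, by rw [← hφ, hL]⟩
  · rintro ⟨L, rfl⟩
    exact ⟨_, hφ L⟩

/-- for `ξ ∈ GF(qᵐ)*` of order `n` and degree `m` over `GF(q)`, a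
permutation `π` of `{0, …, n-1}` is a permutation automorphism of the cyclic code
`C(n, q, {ξ})` iff there is a `q`-polynomial `L` over `GF(qᵐ)` with `L(ξⁱ) = ξ^{π(i)}`
for all `i = 0, …, n-1`. -/
theorem permAut_iff_qPoly {F E : Type*} [Field F] [Fintype F] [Field E] [Fintype E]
    [Algebra F E] (m n : ℕ) (hm : 0 < m) (hrank : Module.finrank F E = m)
    (ξ : E) (hξ : ξ ≠ 0) (hdeg : (minpoly F ξ).natDegree = m) (hn : orderOf ξ = n)
    (π : Equiv.Perm (Fin n)) :
    (∀ c : Fin n → F, (∑ i : Fin n, algebraMap F E (c i) * ξ ^ (i : ℕ)) = 0 →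
        (∑ i : Fin n, algebraMap F E (c (π i)) * ξ ^ (i : ℕ)) = 0) ↔
      ∃ L : Fin m → E, ∀ i : Fin n,
        qPolyMap (Fintype.card F) L (ξ ^ (i : ℕ)) = ξ ^ ((π i : ℕ)) := by
  subst hrank
  have hspan := span_range_pow_eq_top hdeg hn (by
    rw [← hn, ← Units.val_mk0 hξ, orderOf_units]
    exact orderOf_pos _)
  have hcode : (∀ c : Fin n → F, (∑ i : Fin n, algebraMap F E (c i) * ξ ^ (i : ℕ)) = 0 →
        (∑ i : Fin n, algebraMap F E (c (π i)) * ξ ^ (i : ℕ)) = 0) ↔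
      ∃ T : E →ₗ[F] E, ∀ i : Fin n, T (ξ ^ (i : ℕ)) = ξ ^ (π.symm i : ℕ) := by
    rw [exists_linearMap_apply_eq_iff _ hspan]
    refine forall_congr' fun c => ?_
    rw [← Equiv.sum_comp π fun i => c i • ξ ^ (π.symm i : ℕ)]
    simp [Algebra.smul_def]
  have hsymm : (∃ T : E →ₗ[F] E, ∀ i : Fin n, T (ξ ^ (i : ℕ)) = ξ ^ (π.symm i : ℕ)) ↔
      ∃ T : E →ₗ[F] E, ∀ i : Fin n, T (ξ ^ (i : ℕ)) = ξ ^ (π i : ℕ) :=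
    ⟨exists_linearMap_perm_symm hspan π.symm, exists_linearMap_perm_symm hspan π⟩
  rw [hcode, hsymm]
  constructor
  · rintro ⟨T, hT⟩
    obtain ⟨L, hL⟩ := (exists_linearMap_coe_eq_iff_qPolyMap _).mp ⟨T, rfl⟩
    exact ⟨L, fun i => hL ▸ hT i⟩
  · rintro ⟨L, hL⟩
    obtain ⟨T, hT⟩ := (exists_linearMap_coe_eq_iff_qPolyMap _).mpr ⟨L, rfl⟩
    exact ⟨T, fun i => hT ▸ hL i⟩
end

section
/- Let q be a prime power and let φ be nonstandard of degree m over GF(q). Then every ξ ∈ GF(q^m)* such that ξ = λφ for some λ ∈ GF(q)* · ⟨φ⟩ — that is, every ξ in the subgroup GF(q)*·⟨φ⟩ with ⟨φ⟩ ⊆ ⟨ξ⟩ — is again nonstandard of degree m over GF(q), with the same q-order as φ; moreover every q-polynomial L(x) = L_0 x + ⋯ + L_{m−1}x^{q^{m−1}} over GF(q^m) with L(⟨φ⟩) = ⟨φ⟩ satisfies L(⟨ξ⟩) = ⟨ξ⟩. -/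
open Polynomial

theorem powersOf_eq_coe_powers {M : Type*} [Monoid M] (ξ : M) :
    powersOf ξ = (Submonoid.powers ξ : Set M) := by
  ext x
  simp [powersOf, Submonoid.mem_powers_iff, eq_comm]

/-- A positive period of a sequence with range `⟨ξ⟩` is at least the order of `ξ`. -/
theorem orderOf_le_of_periodic {M : Type*} [Monoid M] {ξ : M} {u : ℕ → M}
    (hu : Set.range u = powersOf ξ) {p : ℕ} (hp : 0 < p) (h : ∀ k, u (k + p) = u k) :
    orderOf ξ ≤ p := by
  classical
  have hsub : powersOf ξ ⊆ ((Finset.range p).image u : Finset M) := by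
    rw [← hu]
    rintro _ ⟨k, rfl⟩
    have hk : u (k % p) = u k := Function.Periodic.map_mod_nat h k
    simpa using ⟨k % p, Nat.mod_lt k hp, hk⟩
  calc orderOf ξ ≤ ((Finset.range p).image u).card :=
        Finset.le_card_of_inj_on_range (ξ ^ ·) (fun k _ => hsub ⟨k, rfl⟩) pow_injOn_Iio_orderOf
    _ ≤ p := Finset.card_image_le.trans (Finset.card_range p).le

/-- Recurring sequences with the same characteristic polynomial and the same initial terms
coincide. -/
theorem IsLRS.eq_of_initial {F E : Type*} [Field F] [Field E] [Algebra F E] {f : Polynomial F}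
    {u v : ℕ → E} (hu : IsLRS f u) (hv : IsLRS f v) (h : ∀ k < f.natDegree, u k = v k) :
    u = v := by
  funext k
  induction k using Nat.strong_induction_on with
  | _ k ih =>
    rcases lt_or_ge k f.natDegree with hk | hk
    · exact h k hk
    · obtain ⟨j, rfl⟩ := Nat.exists_eq_add_of_le' hk
      rw [hu j, hv j]
      refine Finset.sum_congr rfl fun i hi => ?_
      rw [ih (j + i) (by have := Finset.mem_range.mp hi; omega)]

/-- A linear image of the powers of an integral element is a recurring sequence. -/
theorem LinearMap.isLRS_pow {F E : Type*} [Field F] [Field E] [Algebra F E] {ξ : E}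
    (hξ : IsIntegral F ξ) (T : E →ₗ[F] E) : IsLRS (minpoly F ξ) fun k => T (ξ ^ k) := by
  intro k
  have h := congrArg (aeval ξ) (minpoly.monic hξ).as_sum
  simp only [minpoly.aeval, map_add, map_sum, map_mul, map_pow, aeval_X, aeval_C] at h
  have hpow : ξ ^ (k + (minpoly F ξ).natDegree) =
      ∑ i ∈ Finset.range (minpoly F ξ).natDegree, (-((minpoly F ξ).coeff i)) • ξ ^ (k + i) := by
    rw [pow_add, eq_neg_of_add_eq_zero_left h.symm, mul_neg, Finset.mul_sum,
      ← Finset.sum_neg_distrib]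
    refine Finset.sum_congr rfl fun i _ => ?_
    rw [Algebra.smul_def, map_neg, pow_add]
    ring
  simp only [hpow, map_sum, map_smul]
  exact Finset.sum_congr rfl fun i _ => Algebra.smul_def _ _

/-- An element of full degree generates a power basis. -/
theorem exists_powerBasis_of_natDegree_minpoly {F E : Type*} [Field F] [Field E] [Algebra F E]
    [FiniteDimensional F E] {ξ : E} (h : (minpoly F ξ).natDegree = Module.finrank F E) :
    ∃ pb : PowerBasis F E, pb.gen = ξ ∧ pb.dim = (minpoly F ξ).natDegree := by
  have hξ : IsIntegral F ξ := .of_finite F ξ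
  have htop : Algebra.adjoin F {ξ} = ⊤ :=
    (IntermediateField.adjoin_simple_eq_top_iff_of_isAlgebraic hξ.isAlgebraic).mp
      ((Field.primitive_element_iff_minpoly_natDegree_eq F ξ).mpr h)
  exact ⟨.ofAdjoinEqTop hξ htop, rfl, rfl⟩

/-- The `q`-polynomial maps are `F`-linear. -/
theorem exists_linearMap_eq_qPolyMap {F E : Type*} [Field F] [Fintype F] [Field E] [Algebra F E]
    {m : ℕ} (c : Fin m → E) : ∃ T : E →ₗ[F] E, ⇑T = qPolyMap (Fintype.card F) c := by
  refine ⟨∑ i : Fin m, c i • ((FiniteField.frobeniusAlgHom F E) ^ (i : ℕ)).toLinearMap, ?_⟩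
  funext x
  simp [qPolyMap, FiniteField.coe_frobeniusAlgHom, AlgHom.coe_pow, pow_iterate]

/-- A linear map permuting `⟨φ⟩` maps every subgroup of `F* ⟨φ⟩` containing `⟨φ⟩` onto
itself. -/
theorem LinearMap.image_powersOf_eq {F E : Type*} [Field F] [Field E] [Finite E] [Algebra F E]
    {φ ξ : E} (hφ0 : φ ≠ 0) {a : F} {k : ℕ} (hξ : ξ = algebraMap F E a * φ ^ k)
    (hsub : φ ∈ Submonoid.powers ξ) (T : E →ₗ[F] E) (hT : T '' powersOf φ = powersOf φ) :
    T '' powersOf ξ = powersOf ξ := by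
  simp only [powersOf_eq_coe_powers] at hT ⊢
  have hle : Submonoid.powers φ ≤ Submonoid.powers ξ := Submonoid.powers_le.mpr hsub
  have ha : algebraMap F E a ∈ Submonoid.powers ξ := by
    have hpos : 0 < orderOf φ :=
      orderOf_pos_iff.mpr (isOfFinOrder_iff_isUnit.mpr hφ0.isUnit)
    have h1 : φ ^ k * φ ^ (k * (orderOf φ - 1)) = 1 := by
      rw [← pow_add, ← mul_one_add, Nat.add_sub_cancel' (Nat.one_le_of_lt hpos), mul_comm, pow_mul,
        pow_orderOf_eq_one, one_pow]
    have h2 : algebraMap F E a = ξ * φ ^ (k * (orderOf φ - 1)) := by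
      rw [hξ, mul_assoc, h1, mul_one]
    rw [h2]
    exact mul_mem (Submonoid.mem_powers ξ) (pow_mem hsub _)
  have hdecomp (j : ℕ) : ξ ^ j = a ^ j • φ ^ (k * j) := by
    rw [hξ, mul_pow, Algebra.smul_def, map_pow, pow_mul]
  have hsmul {j : ℕ} {y : E} (hy : y ∈ Submonoid.powers φ) : a ^ j • y ∈ Submonoid.powers ξ := by
    rw [Algebra.smul_def, map_pow]
    exact mul_mem (pow_mem ha j) (hle hy)
  apply Set.Subset.antisymm
  · rintro _ ⟨_, ⟨j, rfl⟩, rfl⟩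
    have hmem : T (φ ^ (k * j)) ∈ (Submonoid.powers φ : Set E) :=
      hT ▸ Set.mem_image_of_mem T ⟨k * j, rfl⟩
    simp only [hdecomp, map_smul]
    exact hsmul hmem
  · rintro _ ⟨j, rfl⟩
    obtain ⟨y, hy, hTy⟩ : φ ^ (k * j) ∈ T '' (Submonoid.powers φ : Set E) :=
      hT.symm ▸ Submonoid.pow_mem _ (Submonoid.mem_powers φ) _
    refine ⟨a ^ j • y, hsmul hy, ?_⟩
    simp only [hdecomp, map_smul, hTy]

/-- In full degree, nonstandardness is the existence of a linear map fixing `1` that maps `⟨ξ⟩`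
onto itself without being a field automorphism. -/
theorem isNonstandard_iff_exists_linearMap {F E : Type*} [Field F] [Field E] [Finite E]
    [Algebra F E] [FiniteDimensional F E] {ξ : E} (hξ0 : ξ ≠ 0)
    (hdeg : (minpoly F ξ).natDegree = Module.finrank F E) :
    IsNonstandard F (Module.finrank F E) ξ ↔
      ∃ T : E →ₗ[F] E, T '' powersOf ξ = powersOf ξ ∧ T 1 = 1 ∧
        ∀ σ : E →ₐ[F] E, T ≠ σ.toLinearMap := by
  have hint : IsIntegral F ξ := .of_finite F ξ
  obtain ⟨pb, hgen, hdim⟩ := exists_powerBasis_of_natDegree_minpoly hdeg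
  have himage (T : E →ₗ[F] E) : T '' powersOf ξ = Set.range fun k : ℕ => T (ξ ^ k) := by
    ext y
    simp [powersOf]
  constructor
  · rintro ⟨-, u, hu, -, hrange, hu0, hne⟩
    let T : E →ₗ[F] E := pb.basis.constr F fun i => u i
    have hT : (fun k => T (ξ ^ k)) = u := by
      refine (T.isLRS_pow hint).eq_of_initial hu fun k hk => ?_
      rw [← hdim] at hk
      have h := pb.basis.constr_basis F (fun i => u i) ⟨k, hk⟩
      rwa [pb.basis_eq_pow, hgen] at h
    refine ⟨T, by rw [himage, hT, hrange], by simpa using (congrFun hT 0).trans hu0, ?_⟩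
    intro σ hσ
    obtain ⟨i, hi⟩ := hne (σ ξ) (by rw [aeval_algHom_apply, minpoly.aeval, map_zero])
    apply hi
    rw [← congrFun hT i, hσ]
    simp
  · rintro ⟨T, hT, hT1, hne⟩
    rw [himage] at hT
    refine ⟨hdeg, _, T.isLRS_pow hint, ⟨⟨?_, ?_⟩, ?_⟩, hT, by simpa using hT1, ?_⟩
    · exact orderOf_pos_iff.mpr (isOfFinOrder_iff_isUnit.mpr hξ0.isUnit)
    · intro k
      simp only [pow_add, pow_orderOf_eq_one, mul_one]
    · rintro p ⟨hp, h⟩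
      exact orderOf_le_of_periodic hT hp h
    · intro ζ hζ
      by_contra! h
      apply hne (pb.lift ζ (by rwa [hgen]))
      refine pb.basis.ext fun i => ?_
      have hi := h ⟨i, by rw [← hdeg, ← hdim]; exact i.isLt⟩
      rw [AlgHom.toLinearMap_apply, pb.basis_eq_pow, map_pow (pb.lift ζ _), pb.lift_gen, hgen]
      exact hi

/-- extension theorem: if `φ` is nonstandard of degree `m` over `GF(q)`,
then every `ξ ∈ GF(q)*·⟨φ⟩` with `⟨φ⟩ ⊆ ⟨ξ⟩` (i.e. `ξ = λ·φᵏ` and `φ = ξⁱ`) is again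
nonstandard of degree `m` over `GF(q)` with the same `q`-order as `φ`; moreover every
`q`-polynomial `L` over `GF(qᵐ)` with `L(⟨φ⟩) = ⟨φ⟩` satisfies `L(⟨ξ⟩) = ⟨ξ⟩`. -/
theorem extension_theorem {F E : Type*} [Field F] [Fintype F] [Field E] [Fintype E]
    [Algebra F E] (m : ℕ) (hm : 0 < m) (hrank : Module.finrank F E = m)
    (φ : E) (hφ : IsNonstandard F m φ)
    (ξ : E) (hξ0 : ξ ≠ 0)
    (hmem : ∃ (a : F) (k : ℕ), a ≠ 0 ∧ ξ = algebraMap F E a * φ ^ k)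
    (hsub : ∃ i : ℕ, φ = ξ ^ i) :
    IsNonstandard F m ξ ∧ qOrder F ξ = qOrder F φ ∧
      ∀ c : Fin m → E,
        qPolyMap (Fintype.card F) c '' powersOf φ = powersOf φ →
        qPolyMap (Fintype.card F) c '' powersOf ξ = powersOf ξ := by
  subst hrank
  have hfin : FiniteDimensional F E := Module.finite_of_finrank_pos hm
  obtain ⟨a, k, ha, hξ⟩ := hmem
  obtain ⟨i, hi⟩ := hsub
  have hφ0 : φ ≠ 0 := hi ▸ pow_ne_zero i hξ0
  have himage (T : E →ₗ[F] E) (hT : T '' powersOf φ = powersOf φ) :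
      T '' powersOf ξ = powersOf ξ :=
    T.image_powersOf_eq hφ0 hξ ⟨i, hi.symm⟩ hT
  have hdeg : (minpoly F ξ).natDegree = Module.finrank F E := by
    rw [← Field.primitive_element_iff_minpoly_natDegree_eq, eq_top_iff,
      ← (Field.primitive_element_iff_minpoly_natDegree_eq F φ).mpr hφ.1,
      IntermediateField.adjoin_simple_le_iff, hi]
    exact pow_mem (IntermediateField.mem_adjoin_simple_self F ξ) i
  refine ⟨?_, ?_, fun c hc => ?_⟩
  · obtain ⟨T, hT, hT1, hne⟩ := (isNonstandard_iff_exists_linearMap hφ0 hφ.1).mp hφ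
    exact (isNonstandard_iff_exists_linearMap hξ0 hdeg).mpr ⟨T, himage T hT, hT1, hne⟩
  · unfold qOrder
    congr 1
    ext d
    refine and_congr_right fun _ => ⟨?_, ?_⟩
    · rintro ⟨b, hb⟩
      exact ⟨b ^ i, by rw [map_pow, hb, hi, pow_right_comm]⟩
    · rintro ⟨b, hb⟩
      exact ⟨a ^ d * b ^ k, by rw [map_mul, map_pow, map_pow, hb, hξ, mul_pow, pow_right_comm]⟩
  · obtain ⟨T, hT⟩ := exists_linearMap_eq_qPolyMap (F := F) c
    rw [← hT] at hc ⊢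
    exact himage T hc
end

section
/- Let q be a prime power of characteristic p, and let ξ be nonstandard of degree 2 over GF(q) with q-order ord_q(ξ) = 5 and minimal polynomial x² − σ_1 x − σ_0 over GF(q) (necessarily σ_1 ≠ 0). Then p = 2 and ξ/σ_1 has multiplicative order 15, i.e., ξ/σ_1 is a primitive element of the subfield GF(16) of GF(q²). -/
open Polynomial

/-- In characteristic two, `1 + ζ` has order `15` for every primitive fifth root of unity `ζ`. -/
theorem orderOf_inv_one_add_of_pow_five {E : Type*} [Field E] (h2 : (2 : E) = 0) {ζ : E}
    (h5 : ζ ^ 5 = 1) (h1 : ζ ≠ 1) : orderOf (1 + ζ)⁻¹ = 15 := by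
  have hcyc : 1 + ζ + ζ ^ 2 + ζ ^ 3 + ζ ^ 4 = 0 := by
    have : (ζ - 1) * (1 + ζ + ζ ^ 2 + ζ ^ 3 + ζ ^ 4) = 0 := by linear_combination h5
    exact (mul_eq_zero.mp this).resolve_left (sub_ne_zero.mpr h1)
  have hcube : (1 + ζ) ^ 3 = ζ ^ 4 := by
    linear_combination hcyc + (ζ + ζ ^ 2 - ζ ^ 4) * h2
  have hfive : (1 + ζ) ^ 5 = ζ + ζ ^ 4 := by
    linear_combination h5 + (1 + 2 * ζ + 5 * ζ ^ 2 + 5 * ζ ^ 3 + 2 * ζ ^ 4) * h2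
  apply orderOf_eq_of_pow_and_pow_div_prime (by norm_num)
  · rw [inv_pow, inv_eq_one]
    calc (1 + ζ) ^ 15 = ((1 + ζ) ^ 3) ^ 5 := by ring
      _ = (ζ ^ 5) ^ 4 := by rw [hcube]; ring
      _ = 1 := by rw [h5, one_pow]
  · intro p hp hdvd hpow
    rw [inv_pow, inv_eq_one] at hpow
    have hp' : p = 3 ∨ p = 5 := by
      rcases (hp.dvd_mul (m := 3) (n := 5)).mp hdvd with h | h
      · exact .inl ((Nat.prime_dvd_prime_iff_eq hp (by norm_num)).mp h)
      · exact .inr ((Nat.prime_dvd_prime_iff_eq hp (by norm_num)).mp h)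
    rcases hp' with rfl | rfl
    · norm_num at hpow
      have hzero : (ζ + ζ ^ 4) ^ 2 + (ζ + ζ ^ 4) - 1 = 0 := by
        linear_combination hcyc + (2 + ζ ^ 3) * h5
      rw [← hfive, hpow] at hzero
      norm_num at hzero
    · norm_num at hpow
      rw [hcube] at hpow
      exact h1 (by linear_combination h5 - ζ * hpow)

/-- If `(αz + β)⁵ = (a + bz)⁵` on all fifth roots of unity `z`, the mixed coefficients agree. -/
theorem coeff_eq_of_pow_five_eq_on_roots {E : Type*} [Field E] {ζ : E} (h5 : ζ ^ 5 = 1)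
    (h1 : ζ ≠ 1) {α β a b : E}
    (h : ∀ k : ℕ, (α * ζ ^ k + β) ^ 5 = (a + b * ζ ^ k) ^ 5) :
    5 * (α * β ^ 4 - a ^ 4 * b) = 0 ∧ 10 * (α ^ 2 * β ^ 3 - a ^ 3 * b ^ 2) = 0 := by
  have : Fact (Nat.Prime 5) := ⟨Nat.prime_five⟩
  have hord : orderOf ζ = 5 := orderOf_eq_prime h5 h1
  have hinj : Function.Injective fun i : Fin 5 => ζ ^ (i : ℕ) := by
    intro i j hij
    exact Fin.ext (pow_injOn_Iio_orderOf (by simp [hord]) (by simp [hord]) hij)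
  have hv := Matrix.eq_zero_of_forall_index_sum_pow_mul_eq_zero hinj
    (v := ![β ^ 5 + α ^ 5 - a ^ 5 - b ^ 5, 5 * (α * β ^ 4 - a ^ 4 * b),
      10 * (α ^ 2 * β ^ 3 - a ^ 3 * b ^ 2), 10 * (α ^ 3 * β ^ 2 - a ^ 2 * b ^ 3),
      5 * (α ^ 4 * β - a * b ^ 4)]) (by
    intro j
    have hj : (ζ ^ (j : ℕ)) ^ 5 = 1 := by rw [← pow_mul, mul_comm, pow_mul, h5, one_pow]
    simp only [Fin.sum_univ_five, Matrix.cons_val]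
    simp
    linear_combination h j - (α ^ 5 - b ^ 5) * hj)
  exact ⟨by simpa using congrFun hv 1, by simpa using congrFun hv 2⟩

/-- Closed form of a second order recurrence with distinct characteristic roots. -/
theorem exists_closed_form_of_recurrence {E : Type*} [Field E] {x y : E} (hxy : y ≠ x)
    {u : ℕ → E} (h0 : u 0 = 1) (hu : ∀ k, u (k + 2) = (x + y) * u (k + 1) - x * y * u k) :
    ∃ a b : E, a + b = 1 ∧ ∀ k, u k = a * x ^ k + b * y ^ k := by
  have hne : y - x ≠ 0 := sub_ne_zero.mpr hxy
  refine ⟨1 - (u 1 - x) / (y - x), (u 1 - x) / (y - x), by ring, fun k => ?_⟩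
  induction k using Nat.twoStepInduction with
  | zero => simp [h0]
  | one => field_simp; ring
  | more k ih0 ih1 => rw [hu, ih0, ih1]; ring

/-- An element of an extension of `GF(q)` with `x ^ q = x` lies in `GF(q)`. -/
theorem mem_range_algebraMap_of_pow_card_eq_self {F E : Type*} [Field F] [Fintype F] [Field E]
    [Algebra F E] {x : E} (h : x ^ Fintype.card F = x) : x ∈ Set.range (algebraMap F E) := by
  have hsplits : Splits (X ^ Fintype.card F - X : F[X]) := by
    simpa using splits_X_pow_nat_card_sub_X (K := F)
  exact hsplits.mem_range_of_isRoot
    (FiniteField.X_pow_card_sub_X_ne_zero F Fintype.one_lt_card) (by simp [h])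

/-- if `ξ` is nonstandard of degree `2` over `GF(q)` (characteristic `p`)
with `q`-order `5` and minimal polynomial `x² - σ₁x - σ₀` (necessarily `σ₁ ≠ 0`), then
`p = 2` and `ξ/σ₁` has multiplicative order `15`, i.e. `ξ/σ₁` is a primitive element of
the subfield `GF(16)` of `GF(q²)`. -/
theorem nonstandard_qOrder_five {F E : Type*} [Field F] [Fintype F] [Field E] [Fintype E]
    [Algebra F E] (hrank : Module.finrank F E = 2)
    (ξ : E) (σ1 σ0 : F)
    (hmin : minpoly F ξ = X ^ 2 - C σ1 * X - C σ0)
    (hns : IsNonstandard F 2 ξ) (hd : qOrder F ξ = 5) :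
    ringChar F = 2 ∧ σ1 ≠ 0 ∧ orderOf (ξ / algebraMap F E σ1) = 15 := by
  obtain ⟨hdeg, u, hlrs, -, hrange, hu0, hstd⟩ := hns
  have hfive : ξ ^ 5 ∈ Set.range (algebraMap F E) := by
    have hmem : qOrder F ξ ∈ {d : ℕ | 0 < d ∧ ξ ^ d ∈ Set.range (algebraMap F E)} :=
      Nat.sInf_mem (Nat.nonempty_of_pos_sInf (by change 0 < qOrder F ξ; omega))
    rw [hd] at hmem
    exact hmem.2
  let φ : E →ₐ[F] E := FiniteField.frobeniusAlgHom F E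
  have hφ (x : E) : φ x = x ^ Fintype.card F := rfl
  have hφφ (x : E) : φ (φ x) = x := by
    rw [hφ, hφ, ← pow_mul, ← pow_two, ← hrank, ← Module.card_eq_pow_finrank (K := F) (V := E)]
    exact FiniteField.pow_card x
  have hξF : ξ ∉ Set.range (algebraMap F E) := by
    intro h
    have := minpoly.natDegree_eq_one_iff.mpr (show ξ ∈ (algebraMap F E).range from h)
    omega
  have hφξ : φ ξ ≠ ξ := by
    intro h
    exact hξF (mem_range_algebraMap_of_pow_card_eq_self ((hφ ξ).symm.trans h))
  have hξ0 : ξ ≠ 0 := by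
    rintro rfl
    exact hξF ⟨0, map_zero _⟩
  have haeval (x : E) : aeval x (minpoly F ξ)
      = x ^ 2 - algebraMap F E σ1 * x - algebraMap F E σ0 := by simp [hmin]
  have hroot : ξ ^ 2 - algebraMap F E σ1 * ξ - algebraMap F E σ0 = 0 := by
    rw [← haeval, minpoly.aeval]
  set η := φ ξ with hη
  have hroot' : η ^ 2 - algebraMap F E σ1 * η - algebraMap F E σ0 = 0 := by
    simpa using congrArg φ hroot
  have hsum : algebraMap F E σ1 = ξ + η := by
    have : (η - ξ) * (ξ + η - algebraMap F E σ1) = 0 := by linear_combination hroot' - hroot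
    linear_combination -(mul_eq_zero.mp this).resolve_left (sub_ne_zero.mpr hφξ)
  have hprod : algebraMap F E σ0 = -(ξ * η) := by
    linear_combination -hroot - ξ * hsum
  have hrec (k : ℕ) : u (k + 2) = (ξ + η) * u (k + 1) - ξ * η * u k := by
    have h := hlrs k
    rw [hdeg, Finset.sum_range_succ, Finset.sum_range_one, hmin] at h
    simp [coeff_X, coeff_C, hsum, hprod] at h
    rw [h]
    ring
  obtain ⟨a, b, hab, hu⟩ := exists_closed_form_of_recurrence hφξ hu0 hrec
  have ha : a ≠ 0 := by
    rintro rfl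
    obtain ⟨i, hi⟩ := hstd η (by rw [haeval, hroot'])
    rw [zero_add] at hab
    exact hi (by rw [hu, hab]; ring)
  have hb : b ≠ 0 := by
    rintro rfl
    obtain ⟨i, hi⟩ := hstd ξ (by rw [haeval, hroot])
    rw [add_zero] at hab
    exact hi (by rw [hu, hab]; ring)
  have hφ5 : η ^ 5 = ξ ^ 5 := by
    obtain ⟨c, hc⟩ := hfive
    rw [hη, ← map_pow, ← hc, φ.commutes]
  set ζ := η / ξ with hζ
  have hηζ : η = ξ * ζ := by rw [hζ]; field_simp
  have hζ5 : ζ ^ 5 = 1 := by rw [hζ, div_pow, hφ5, div_self (pow_ne_zero _ hξ0)]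
  have hζ1 : ζ ≠ 1 := by
    intro h
    exact hφξ (by rw [hηζ, h, mul_one])
  have hφu (k : ℕ) : φ (u k) = φ a * η ^ k + φ b * ξ ^ k := by
    rw [hu, map_add, map_mul, map_mul, map_pow, map_pow, hη, hφφ]
  have hu5 (k : ℕ) : φ (u k) ^ 5 = u k ^ 5 := by
    obtain ⟨j, hj⟩ : u k ∈ powersOf ξ := hrange ▸ Set.mem_range_self k
    rw [hj, map_pow, ← hη, ← pow_mul, mul_comm, pow_mul, hφ5, ← pow_mul, ← pow_mul, mul_comm]
  obtain ⟨hc1, hc2⟩ := coeff_eq_of_pow_five_eq_on_roots hζ5 hζ1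
    (α := φ a) (β := φ b) (a := a) (b := b) (by
      intro k
      have h := hu5 k
      rw [hφu, hu, hηζ, mul_pow] at h
      apply mul_left_cancel₀ (pow_ne_zero 5 (pow_ne_zero k hξ0))
      linear_combination h)
  have hp5 : (5 : E) ≠ 0 := by
    intro h
    have : (ζ - 1) ^ 5 = 0 := by
      linear_combination hζ5 + (-ζ ^ 4 + 2 * ζ ^ 3 - 2 * ζ ^ 2 + ζ) * h
    exact hζ1 (sub_eq_zero.mp (pow_eq_zero_iff (by norm_num) |>.mp this))
  have hp2 : (2 : E) = 0 := by
    by_contra hp2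
    have hp10 : (10 : E) ≠ 0 := by
      rw [show (10 : E) = 2 * 5 by norm_num]
      exact mul_ne_zero hp2 hp5
    have hc1 := (mul_eq_zero.mp hc1).resolve_left hp5
    have hc2 := (mul_eq_zero.mp hc2).resolve_left hp10
    have hφab : φ a + φ b = 1 := by rw [← map_add, hab, map_one]
    have hdet : φ b * b = φ a * a := by
      apply mul_left_cancel₀ (mul_ne_zero (pow_ne_zero 3 ha) hb)
      linear_combination φ a * hc1 - φ b * hc2
    have hφb : φ b = a := by
      linear_combination hdet - φ b * hab + a * hφab
    have hφa : φ a = b := by linear_combination hφab - hφb - hab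
    obtain ⟨k, hk⟩ : ξ ∈ Set.range u := hrange ▸ ⟨1, (pow_one ξ).symm⟩
    apply hφξ
    rw [hη, ← hk, hφu, hu, hφa, hφb, add_comm]
  have hone : 1 + ζ ≠ 0 := by
    intro h
    have h0 : orderOf (0 : E)⁻¹ = 15 := h ▸ orderOf_inv_one_add_of_pow_five hp2 hζ5 hζ1
    simp at h0
  have hσ : algebraMap F E σ1 = ξ * (1 + ζ) := by rw [hsum, hηζ]; ring
  refine ⟨?_, ?_, ?_⟩
  · apply CharP.ringChar_of_prime_eq_zero Nat.prime_two
    apply (algebraMap F E).injective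
    simpa only [Nat.cast_ofNat, map_ofNat, map_zero] using hp2
  · rintro rfl
    rw [map_zero] at hσ
    exact mul_ne_zero hξ0 hone hσ.symm
  · rw [hσ, show ξ / (ξ * (1 + ζ)) = (1 + ζ)⁻¹ by field_simp]
    exact orderOf_inv_one_add_of_pow_five hp2 hζ5 hζ1
end

section
/- Let q be a prime power and let ξ be nonstandard of degree 2 over GF(q), with multiplicative order n and q-order d = ord_q(ξ). Then either d = 2, and writing n = 2e both q and (q−1)/e are odd; or d ≥ 4 and there exists a prime power q_0 and an odd positive integer t such that q = q_0^t, d = q_0 + 1, q_0 − 1 divides e = n/d, and ξ^{e/(q_0−1)} has multiplicative order q_0² − 1 (i.e., is a primitive element of the subfield GF(q_0²) of GF(q²)). -/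
open Polynomial

/-- Elements of an extension of `F` fixed by the `|F|`-power Frobenius lie in `F`. -/
theorem mem_range_algebraMap_iff_pow_card {F E : Type*} [Field F] [Fintype F] [Field E]
    [Finite E] [Algebra F E] (x : E) :
    x ∈ Set.range (algebraMap F E) ↔ x ^ Fintype.card F = x := by
  constructor
  · rintro ⟨y, rfl⟩
    rw [← map_pow, FiniteField.pow_card]
  · intro hx
    refine (IsGalois.mem_range_algebraMap_iff_fixed x).mpr fun σ => ?_
    obtain ⟨i, rfl⟩ :=
      (FiniteField.bijective_frobeniusAlgEquivOfAlgebraic_pow F E).surjective σ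
    have h : ∀ i : ℕ, (FiniteField.frobeniusAlgEquivOfAlgebraic F E ^ i) x = x := by
      intro i
      induction i with
      | zero => rfl
      | succ i ih =>
        rw [pow_succ, AlgEquiv.mul_apply, FiniteField.coe_frobeniusAlgEquivOfAlgebraic]
        exact (congrArg _ hx).trans ih
    exact h i

/-- If a fractional linear map `z ↦ (A z + B) / (b z + a)` sends `d`-th roots of unity to `d`-th
roots of unity, then the intermediate coefficients of `(A z + B) ^ d` and `(b z + a) ^ d` agree. -/
theorem choose_mul_sub_eq_zero {E : Type*} [Field E] {ζ A B a b : E} {d : ℕ}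
    (hd : orderOf ζ = d) (h : ∀ j : ℕ, (A * ζ ^ j + B) ^ d = (b * ζ ^ j + a) ^ d)
    {i : ℕ} (hi : 0 < i) (hid : i < d) :
    (d.choose i : E) * (A ^ i * B ^ (d - i) - b ^ i * a ^ (d - i)) = 0 := by
  set c : ℕ → E := fun i => (d.choose i : E) * (A ^ i * B ^ (d - i) - b ^ i * a ^ (d - i)) with hc
  let v : Fin d → E := fun i => if (i : ℕ) = 0 then c 0 + c d else c i
  have hinj : Function.Injective fun j : Fin d => ζ ^ (j : ℕ) := fun j k hjk =>
    Fin.ext (pow_injOn_Iio_orderOf (by simp [hd]) (by simp [hd]) hjk)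
  have hv : v = 0 := by
    refine Matrix.eq_zero_of_forall_index_sum_pow_mul_eq_zero hinj fun j => ?_
    have hz : (ζ ^ (j : ℕ)) ^ d = 1 := by
      rw [← pow_mul, mul_comm, pow_mul, orderOf_dvd_iff_pow_eq_one.mp hd.dvd, one_pow]
    have key := h j
    set z := ζ ^ (j : ℕ)
    have hsum : ∑ i ∈ Finset.range (d + 1), z ^ i * c i = 0 := by
      rw [add_pow, add_pow, ← sub_eq_zero, ← Finset.sum_sub_distrib] at key
      rw [← key]
      refine Finset.sum_congr rfl fun i _ => ?_
      simp only [hc, mul_pow]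
      ring
    obtain ⟨k, rfl⟩ : ∃ k, d = k + 1 := ⟨d - 1, by omega⟩
    rw [Fin.sum_univ_succ]
    rw [Finset.sum_range_succ, hz, Finset.sum_range_succ', ← Fin.sum_univ_eq_sum_range
      (fun i => z ^ (i + 1) * c (i + 1))] at hsum
    simp only [v, Fin.val_zero, if_true, Fin.val_succ, Nat.succ_ne_zero, if_false]
    linear_combination hsum
  have hvi := congrFun hv ⟨i, hid⟩
  simp only [v, hi.ne', if_false] at hvi
  exact hvi

/-- Two consecutive binomial coefficients that do not vanish force the fractional linear map to be
degenerate. -/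
theorem mul_eq_mul_of_choose_ne_zero {E : Type*} [Field E] {ζ A B a b : E} {d : ℕ}
    (hA : A ≠ 0) (hB : B ≠ 0) (hd : orderOf ζ = d)
    (h : ∀ j : ℕ, (A * ζ ^ j + B) ^ d = (b * ζ ^ j + a) ^ d)
    {i : ℕ} (hi : 0 < i) (hid : i + 1 < d) (h₁ : (d.choose i : E) ≠ 0)
    (h₂ : (d.choose (i + 1) : E) ≠ 0) : A * a = B * b := by
  have e₁ := (mul_eq_zero.mp (choose_mul_sub_eq_zero hd h hi (by omega))).resolve_left h₁
  have e₂ := (mul_eq_zero.mp (choose_mul_sub_eq_zero hd h (by omega) hid)).resolve_left h₂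
  obtain ⟨k, rfl⟩ : ∃ k, d = i + 1 + k := ⟨d - (i + 1), by omega⟩
  rw [show i + 1 + k - i = k + 1 by omega] at e₁
  rw [show i + 1 + k - (i + 1) = k by omega] at e₂
  have hX : A ^ i * B ^ k ≠ 0 := mul_ne_zero (pow_ne_zero _ hA) (pow_ne_zero _ hB)
  have e₃ : A ^ i * B ^ k * B = b ^ i * a ^ k * a := by linear_combination e₁
  have e₄ : A ^ i * B ^ k * A = b ^ i * a ^ k * b := by linear_combination e₂
  refine mul_left_cancel₀ hX ?_
  linear_combination a * e₄ - b * e₃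

theorem choose_prime_pow_mul_modEq {p : ℕ} (hp : p.Prime) (s m : ℕ) :
    (p ^ s * m).choose (p ^ s) ≡ m [MOD p] := by
  have := Fact.mk hp
  induction s with
  | zero => simp [Nat.ModEq.refl]
  | succ s ih =>
    refine Choose.choose_modEq_choose_mod_mul_choose_div_nat.trans ?_
    rw [pow_succ', mul_assoc, Nat.mul_mod_right, Nat.mul_mod_right,
      Nat.mul_div_cancel_left _ hp.pos, Nat.mul_div_cancel_left _ hp.pos]
    simpa using ih

/-- A row of Pascal's triangle modulo `p`, of index `d` prime to `p`, without two consecutive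
nonzero inner entries has index `p ^ s + 1`. -/
theorem exists_eq_prime_pow_add_one {p d : ℕ} (hp : p.Prime) (hpd : ¬ p ∣ d) (hd : 3 ≤ d)
    (h : ∀ i, 0 < i → i + 1 < d → p ∣ d.choose i ∨ p ∣ d.choose (i + 1)) :
    4 ≤ d ∧ ∃ s, 0 < s ∧ d = p ^ s + 1 := by
  have := Fact.mk hp
  have h1 : p ∣ d.choose 2 := (h 1 one_pos (by omega)).resolve_left (by simpa using hpd)
  refine ⟨?_, ?_⟩
  · by_contra hlt
    obtain rfl : d = 3 := by omega
    exact hpd (by simpa using h1)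
  have h2 : p ∣ d - 1 := by
    have h3 : p ∣ d * (d - 1) := by
      rw [Nat.choose_two_right] at h1
      exact h1.trans (Nat.div_dvd_of_dvd (Nat.even_mul_pred_self d).two_dvd)
    exact (hp.dvd_mul.mp h3).resolve_left hpd
  obtain ⟨s, m, hpm, hdm⟩ := Nat.exists_eq_pow_mul_and_not_dvd (n := d - 1) (by omega) p hp.ne_one
  have hs : s ≠ 0 := by
    rintro rfl
    apply hpm
    simpa [hdm] using h2
  have hdm' : d = p ^ s * m + 1 := by omega
  refine ⟨s, Nat.pos_of_ne_zero hs, ?_⟩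
  suffices m = 1 by simpa [this] using hdm'
  by_contra hm1
  have hm0 : m ≠ 0 := by rintro rfl; simp at hpm
  have hps : 1 ≤ p ^ s := Nat.pos_of_ne_zero (pow_ne_zero _ hp.ne_zero)
  have hlt : p ^ s + 1 < d := by
    have : p ^ s * 2 ≤ p ^ s * m := Nat.mul_le_mul_left _ (by omega)
    have : 2 ≤ p ^ s := hp.two_le.trans (Nat.le_self_pow hs p)
    omega
  have hc1 : ¬ p ∣ d.choose (p ^ s) := by
    obtain ⟨k, rfl⟩ : ∃ k, s = k + 1 := ⟨s - 1, by omega⟩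
    have key : d.choose (p ^ (k + 1)) ≡ m [MOD p] := by
      refine Choose.choose_modEq_choose_mod_mul_choose_div_nat.trans ?_
      rw [hdm', pow_succ', mul_assoc, Nat.mul_mod_right, Nat.mul_div_cancel_left _ hp.pos,
        Nat.mul_add_div hp.pos, Nat.div_eq_of_lt hp.one_lt]
      simpa using choose_prime_pow_mul_modEq hp k m
    rwa [key.dvd_iff dvd_rfl]
  refine (h (p ^ s) hps hlt).elim hc1 fun hc2 => ?_
  have e := Nat.choose_succ_right_eq d (p ^ s)
  have : p ∣ d.choose (p ^ s) * (d - p ^ s) := e ▸ hc2.mul_right _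
  have h4 := (hp.dvd_mul.mp this).resolve_left hc1
  have h5 : p ∣ d - p ^ s + p ^ s := by
    exact dvd_add h4 (dvd_pow_self p hs)
  rw [Nat.sub_add_cancel (by omega)] at h5
  exact hpd h5

/-- If `p ^ s + 1 ∣ p ^ r + 1` then `r` is an odd multiple of `s`. -/
theorem exists_odd_mul_of_pow_add_one_dvd {p s r : ℕ} (hp : 1 < p) (hs : 0 < s)
    (h : p ^ s + 1 ∣ p ^ r + 1) : ∃ t, Odd t ∧ r = s * t := by
  induction r using Nat.strong_induction_on with
  | _ r ih =>
    rcases lt_or_ge r s with hr | hr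
    · have h1 := Nat.le_of_dvd (by positivity) h
      have h2 := Nat.pow_lt_pow_right hp hr
      omega
    obtain ⟨k, rfl⟩ := Nat.exists_eq_add_of_le hr
    have h1 : p ^ s + 1 ∣ p ^ k - 1 := by
      have e : p ^ k * (p ^ s + 1) = (p ^ (s + k) + 1) + (p ^ k - 1) := by
        have : 1 ≤ p ^ k := Nat.one_le_pow _ _ (by omega)
        rw [mul_add, ← pow_add, add_comm k s]
        omega
      exact (Nat.dvd_add_right h).mp (e ▸ dvd_mul_left _ _)
    rcases Nat.eq_zero_or_pos k with rfl | hk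
    · exact ⟨1, odd_one, by simp⟩
    have hk1 : 1 < p ^ k := Nat.one_lt_pow hk.ne' hp
    have h2 := Nat.le_of_dvd (by omega) h1
    have hks : s ≤ k := by
      by_contra hlt
      have := Nat.pow_lt_pow_right hp (not_le.mp hlt)
      omega
    obtain ⟨l, rfl⟩ := Nat.exists_eq_add_of_le hks
    have h3 : p ^ s + 1 ∣ p ^ l + 1 := by
      have e : p ^ l * (p ^ s + 1) = (p ^ (s + l) - 1) + (p ^ l + 1) := by
        rw [mul_add, ← pow_add, add_comm l s]
        omega
      exact (Nat.dvd_add_right h1).mp (e ▸ dvd_mul_left _ _)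
    obtain ⟨t, ht, hlt⟩ := ih l (by omega) h3
    exact ⟨t + 2, ht.add_even even_two, by rw [hlt]; ring⟩

/-- The case `d = q₀ + 1` of the coefficient comparison: the `q`-conjugate of `a` is its
`q₀`-conjugate. -/
theorem eq_pow_of_mul_pow_eq {E : Type*} [Field E] {p : ℕ} [Fact p.Prime] [CharP E p]
    {s : ℕ} {A B a b : E} (hAB : A + B = 1) (hab : a + b = 1) (hne : A * a ≠ B * b)
    (h₁ : A * B ^ p ^ s = b * a ^ p ^ s) (h₂ : A ^ p ^ s * B = b ^ p ^ s * a) :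
    A = a ^ p ^ s ∧ B = b ^ p ^ s := by
  obtain rfl : B = 1 - A := by linear_combination hAB
  obtain rfl : b = 1 - a := by linear_combination hab
  rw [sub_pow_char_pow, one_pow] at *
  have e₁ : (1 - (A + a)) * (A - a ^ p ^ s) = 0 := by
    linear_combination (1 - A) * h₁ + A * h₂
  have e₂ : A = a ^ p ^ s := by
    refine sub_eq_zero.mp ((mul_eq_zero.mp e₁).resolve_left fun e => hne ?_)
    linear_combination -e
  exact ⟨e₂, by rw [e₂]⟩

/-- The norms `(a + b z) ^ (q₀ + 1)`, for `z` a `(q₀ + 1)`-th root of unity, take too many values to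
lie in a proper subgroup of the multiplicative group of the field with `q₀` elements. -/
theorem eq_sub_one_of_norm_pow_eq_one {E : Type*} [Field E] {p : ℕ} [hp : Fact p.Prime] [CharP E p]
    {s g : ℕ} (hs : 0 < s) {a b z : E} (ha : a ≠ 0) (hb : b ≠ 0) (hz : orderOf z = p ^ s + 1)
    (hg : g ∣ p ^ s - 1) (h : ∀ j : ℕ, ((a + b * z ^ j) ^ (p ^ s + 1)) ^ g = 1) :
    g = p ^ s - 1 := by
  classical
  have hq : 2 ≤ p ^ s := hp.out.two_le.trans (Nat.le_self_pow hs.ne' p)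
  have hz0 : z ^ (p ^ s + 1) = 1 := hz ▸ pow_orderOf_eq_one z
  have hg0 : 0 < g := Nat.pos_of_dvd_of_pos hg (by omega)
  set w : ℕ → E := fun j => (a + b * z ^ j) ^ (p ^ s + 1) with hw
  have hfib : ∀ y ∈ (Finset.range (p ^ s + 1)).image w,
      ((Finset.range (p ^ s + 1)).filter fun j => w j = y).card ≤ 2 := by
    intro y _
    set P : E[X] := C (b * a ^ p ^ s) * X ^ 2 +
      C (a * a ^ p ^ s + b * b ^ p ^ s - y) * X + C (a * b ^ p ^ s)
    have hlead : b * a ^ p ^ s ≠ 0 := mul_ne_zero hb (pow_ne_zero _ ha)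
    have hdeg : P.natDegree = 2 := natDegree_quadratic hlead
    have hP : P ≠ 0 := by
      intro h0
      simp [h0] at hdeg
    refine le_trans ?_ ((Multiset.toFinset_card_le _).trans (hdeg ▸ P.card_roots'))
    refine Finset.card_le_card_of_injOn (fun j => z ^ j) ?_ ?_
    · intro j hj
      have hwj : w j = y := (Finset.mem_filter.mp hj).2
      have hzj : (z ^ j) ^ p ^ s * z ^ j = 1 := by
        rw [← pow_succ, ← pow_mul, mul_comm, pow_mul, hz0, one_pow]
      have hroot : P.IsRoot (z ^ j) := by
        simp only [hw] at hwj
        rw [pow_succ, add_pow_char_pow, mul_pow] at hwj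
        simp only [P, IsRoot.def, eval_add, eval_mul, eval_C, eval_pow, eval_X]
        linear_combination (z ^ j) * hwj - b ^ p ^ s * (a + b * z ^ j) * hzj
      simpa [hP] using hroot
    · intro i hi j hj hij
      have hi' := Finset.mem_range.mp (Finset.mem_filter.mp hi).1
      have hj' := Finset.mem_range.mp (Finset.mem_filter.mp hj).1
      exact pow_injOn_Iio_orderOf (by simpa [hz] using hi') (by simpa [hz] using hj') hij
  have h1 := Finset.card_le_mul_card_image _ 2 hfib
  have h2 : ((Finset.range (p ^ s + 1)).image w).card ≤ g := by
    refine le_trans (Finset.card_le_card ?_)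
      ((Multiset.toFinset_card_le _).trans (card_nthRoots g (1 : E)))
    intro y hy
    obtain ⟨j, _, rfl⟩ := Finset.mem_image.mp hy
    simpa [mem_nthRoots hg0] using h j
  rw [Finset.card_range] at h1
  obtain ⟨c, hc⟩ := hg
  have hc1 : c < 2 := by
    by_contra! hge
    have := Nat.mul_le_mul_left g hge
    omega
  interval_cases c <;> omega

/-- A nonstandard element of degree two gives an `F`-linear map `x ↦ a x + b x ^ q` with
`a, b ≠ 0` and `a + b = 1` that maps the group of its powers onto itself. -/
theorem IsNonstandard.exists_qPoly {F E : Type*} [Field F] [Fintype F] [Field E]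
    [Finite E] [Algebra F E] {ξ : E} (h : IsNonstandard F 2 ξ) :
    ξ ∉ Set.range (algebraMap F E) ∧ ∃ a b : E, a ≠ 0 ∧ b ≠ 0 ∧ a + b = 1 ∧
      (∀ k : ℕ, ∃ j : ℕ, a * ξ ^ k + b * (ξ ^ k) ^ Fintype.card F = ξ ^ j) ∧
      ∃ k : ℕ, a * ξ ^ k + b * (ξ ^ k) ^ Fintype.card F = ξ := by
  obtain ⟨hdeg, u, hrec, -, hran, hu0, hne⟩ := h
  have hint : IsIntegral F ξ := Algebra.IsIntegral.isIntegral ξ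
  have hξ : ξ ∉ Set.range (algebraMap F E) := fun hmem => by
    have := minpoly.natDegree_eq_one_iff.mpr hmem
    omega
  refine ⟨hξ, ?_⟩
  have hroot : ∀ x : E, aeval x (minpoly F ξ) = 0 → ∀ k : ℕ, x ^ (k + 2) =
      algebraMap F E (-((minpoly F ξ).coeff 0)) * x ^ k +
        algebraMap F E (-((minpoly F ξ).coeff 1)) * x ^ (k + 1) := by
    intro x hx k
    have h2 : (minpoly F ξ).coeff 2 = 1 := hdeg ▸ (minpoly.monic hint).coeff_natDegree
    rw [aeval_eq_sum_range, hdeg] at hx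
    simp only [Finset.sum_range_succ, Finset.sum_range_zero, h2, Algebra.smul_def, map_one] at hx
    rw [map_neg, map_neg]
    linear_combination x ^ k * hx
  have hξ1 : aeval ξ (minpoly F ξ) = 0 := minpoly.aeval F ξ
  have hξ2 : aeval (ξ ^ Fintype.card F) (minpoly F ξ) = 0 := by
    have := aeval_algHom_apply (FiniteField.frobeniusAlgHom F E) ξ (minpoly F ξ)
    rw [hξ1, map_zero] at this
    exact this
  have hrec' : ∀ k : ℕ, u (k + 2) =
      algebraMap F E (-((minpoly F ξ).coeff 0)) * u k +
        algebraMap F E (-((minpoly F ξ).coeff 1)) * u (k + 1) := by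
    intro k
    have := hrec k
    rw [hdeg] at this
    simpa only [Finset.sum_range_succ, Finset.sum_range_zero, zero_add, add_zero] using this
  have hsub : ξ - ξ ^ Fintype.card F ≠ 0 := fun h0 =>
    hξ ((mem_range_algebraMap_iff_pow_card ξ).mpr (sub_eq_zero.mp h0).symm)
  obtain ⟨a, ha⟩ : ∃ a : E, a * (ξ - ξ ^ Fintype.card F) = u 1 - ξ ^ Fintype.card F :=
    ⟨_, div_mul_cancel₀ _ hsub⟩
  have hu : ∀ k : ℕ, u k = a * ξ ^ k + (1 - a) * (ξ ^ k) ^ Fintype.card F := by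
    intro k
    induction k using Nat.twoStepInduction with
    | zero => simp [hu0]
    | one => linear_combination -ha
    | more k ih₁ ih₂ =>
      rw [hrec', ih₁, ih₂, ← pow_mul, ← pow_mul, ← pow_mul, mul_comm k, mul_comm (k + 1),
        mul_comm (k + 2), pow_mul _ _ (k + 2), hroot ξ hξ1 k, hroot _ hξ2 k, pow_mul, pow_mul]
      ring
  refine ⟨a, 1 - a, ?_, ?_, by ring, fun k => ?_, ?_⟩
  · rintro rfl
    obtain ⟨i, hi⟩ := hne _ hξ2
    exact hi (by rw [hu, ← pow_mul, ← pow_mul, mul_comm]; ring)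
  · intro h0
    obtain rfl : a = 1 := by linear_combination -h0
    obtain ⟨i, hi⟩ := hne _ hξ1
    exact hi (by rw [hu]; ring)
  · have : u k ∈ powersOf ξ := hran ▸ Set.mem_range_self k
    obtain ⟨j, hj⟩ := this
    exact ⟨j, by rw [← hj, hu]⟩
  · have : ξ ∈ Set.range u := hran ▸ ⟨1, (pow_one ξ).symm⟩
    obtain ⟨k, hk⟩ := this
    exact ⟨k, by rw [← hu, hk]⟩

theorem qOrder_eq_orderOf {F E : Type*} [Field F] [Fintype F] [Field E] [Finite E]
    [Algebra F E] {ξ : E} (hξ : ξ ≠ 0) : qOrder F ξ = orderOf (ξ ^ (Fintype.card F - 1)) := by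
  have key : ∀ d : ℕ, ξ ^ d ∈ Set.range (algebraMap F E) ↔
      (ξ ^ (Fintype.card F - 1)) ^ d = 1 := by
    intro d
    rw [mem_range_algebraMap_iff_pow_card, ← pow_mul _ _ d, mul_comm _ d, pow_mul _ d]
    have h0 : ξ ^ d ≠ 0 := pow_ne_zero _ hξ
    obtain ⟨c, hc⟩ : ∃ c, Fintype.card F = c + 1 :=
      ⟨_, (Nat.succ_pred_eq_of_pos Fintype.card_pos).symm⟩
    rw [hc, Nat.add_sub_cancel, pow_succ, mul_eq_right₀ h0]
  have hfin : IsOfFinOrder (ξ ^ (Fintype.card F - 1)) := by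
    have := (isOfFinOrder_of_finite (Units.mk0 ξ hξ ^ (Fintype.card F - 1)))
    simpa using (Units.coeHom E).isOfFinOrder this
  refine IsLeast.csInf_eq ⟨⟨hfin.orderOf_pos, (key _).mpr (pow_orderOf_eq_one _)⟩, ?_⟩
  rintro d ⟨hd, hmem⟩
  exact orderOf_le_of_pow_eq_one hd ((key d).mp hmem)

/-- classification: if `ξ` is nonstandard of degree `2` over `GF(q)`
with multiplicative order `n` and `q`-order `d`, then either `d = 2` and, writing
`n = 2e`, both `q` and `(q-1)/e` are odd; or `d ≥ 4` and there is a prime power `q₀`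
and an odd `t` with `q = q₀ᵗ`, `d = q₀ + 1`, `q₀ - 1 ∣ e = n/d`, and `ξ^{e/(q₀-1)}`
has multiplicative order `q₀² - 1` (a primitive element of `GF(q₀²) ⊆ GF(q²)`). -/
theorem nonstandard_degree_two_classification {F E : Type*} [Field F] [Fintype F]
    [Field E] [Fintype E] [Algebra F E] (hrank : Module.finrank F E = 2)
    (ξ : E) (hns : IsNonstandard F 2 ξ) :
    (qOrder F ξ = 2 ∧ ∃ e : ℕ, orderOf ξ = 2 * e ∧ Odd (Fintype.card F) ∧
        Odd ((Fintype.card F - 1) / e)) ∨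
    (4 ≤ qOrder F ξ ∧ ∃ q0 t : ℕ, IsPrimePow q0 ∧ Odd t ∧
        Fintype.card F = q0 ^ t ∧ qOrder F ξ = q0 + 1 ∧
        (q0 - 1) ∣ orderOf ξ / qOrder F ξ ∧
        orderOf (ξ ^ (orderOf ξ / qOrder F ξ / (q0 - 1))) = q0 ^ 2 - 1) := by
  obtain ⟨hξF, a, b, ha, hb, hab, hK, k₀, hk₀⟩ := hns.exists_qPoly
  have hξ0 : ξ ≠ 0 := by
    rintro rfl
    exact hξF ⟨0, map_zero _⟩
  rw [qOrder_eq_orderOf hξ0]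
  obtain ⟨p, hpF, r, hp, hq⟩ := FiniteField.card' F
  have hpE : CharP E p := charP_of_injective_algebraMap (algebraMap F E).injective p
  have := Fact.mk hp
  have hfrob : ∀ x y : E, (x + y) ^ Fintype.card F = x ^ Fintype.card F + y ^ Fintype.card F :=
    map_add (FiniteField.frobeniusAlgHom F E)
  have hfrob2 : ∀ x : E, (x ^ Fintype.card F) ^ Fintype.card F = x := by
    intro x
    rw [← pow_mul, ← sq, ← hrank, ← Module.card_eq_pow_finrank, FiniteField.pow_card]
  have hnotF : ξ ^ Fintype.card F ≠ ξ := fun h => hξF ((mem_range_algebraMap_iff_pow_card ξ).mpr h)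
  have hq1 : 1 < Fintype.card F := Fintype.one_lt_card
  generalize hQ : Fintype.card F = q at *
  set n := orderOf ξ with hn
  set z := ξ ^ (q - 1) with hz
  have hzξ : z * ξ = ξ ^ q := pow_sub_one_mul (by omega) ξ
  set d := orderOf z with hd
  set e := n.gcd (q - 1) with he
  have hn0 : 0 < n := by
    have hfin := (Units.coeHom E).isOfFinOrder (isOfFinOrder_of_finite (Units.mk0 ξ hξ0))
    exact IsOfFinOrder.orderOf_pos (x := ξ) hfin
  have he0 : 0 < e := Nat.gcd_pos_of_pos_left _ hn0
  have hnde : n = d * e := by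
    rw [hd, hz, orderOf_pow' _ (by omega), Nat.div_mul_cancel (Nat.gcd_dvd_left _ _)]
  have hd0 : 0 < d := Nat.pos_of_mul_pos_right (hnde ▸ hn0)
  have hnd : n / d = e := by rw [hnde, Nat.mul_div_cancel_left _ hd0]
  have hdq : d ∣ q + 1 := by
    refine orderOf_dvd_of_pow_eq_one (mul_right_cancel₀ hξ0 ?_)
    rw [pow_succ, mul_assoc, hzξ, ← mul_pow, hzξ, hfrob2, one_mul]
  have hpd : ¬ p ∣ d := by
    intro h
    have h1 : p ∣ q := hq ▸ dvd_pow_self p r.ne_zero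
    exact hp.one_lt.ne' (Nat.dvd_one.mp ((Nat.dvd_add_right h1).mp (h.trans hdq)))
  have hnq : ¬ n ∣ q - 1 := by
    intro h
    apply hnotF
    rw [← hzξ, hz, orderOf_dvd_iff_pow_eq_one.mp h, one_mul]
  have hd1 : d ≠ 1 := by
    intro h
    exact hnq (by rw [hnde, h, one_mul]; exact Nat.gcd_dvd_right _ _)
  rcases (show d = 2 ∨ 3 ≤ d by omega) with hd2 | hd3
  · left
    refine ⟨hd2, e, by rw [hnde, hd2], ?_, ?_⟩
    · rw [hd2] at hdq
      rw [Nat.odd_iff]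
      omega
    · rw [← Nat.not_even_iff_odd]
      intro hev
      obtain ⟨c, hc⟩ := Nat.gcd_dvd_right n (q - 1)
      rw [← he] at hc
      rw [hc, Nat.mul_div_cancel_left _ he0] at hev
      obtain ⟨m, rfl⟩ := hev
      exact hnq ⟨m, by rw [hc, hnde, hd2]; ring⟩
  right
  have hzd : z ^ d = 1 := pow_orderOf_eq_one z
  have hξz : ∀ k : ℕ, (ξ ^ k) ^ q = ξ ^ k * z ^ k := by
    intro k
    rw [← mul_pow, mul_comm ξ, hzξ, ← pow_mul, ← pow_mul, mul_comm]
  have hy : ∀ k : ℕ, (a + b * z ^ k) ^ n = 1 := by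
    intro k
    obtain ⟨j, hj⟩ := hK k
    have h1 : ∀ i : ℕ, (ξ ^ i) ^ n = 1 := fun i => by
      rw [← pow_mul, mul_comm, pow_mul, pow_orderOf_eq_one, one_pow]
    rw [hξz] at hj
    have h2 : ξ ^ k * (a + b * z ^ k) = ξ ^ j := by linear_combination hj
    simpa [mul_pow, h1] using congrArg (· ^ n) h2
  have hyq : ∀ k : ℕ, a ^ q * z ^ k + b ^ q = z ^ k * (a + b * z ^ k) ^ q := by
    intro k
    have h1 : z ^ k * (z ^ k) ^ q = 1 := by
      rw [← pow_succ', ← pow_mul, mul_comm, pow_mul, orderOf_dvd_iff_pow_eq_one.mp hdq, one_pow]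
    rw [hfrob, mul_pow]
    linear_combination -b ^ q * h1
  have hmap : ∀ k : ℕ, (a ^ q * z ^ k + b ^ q) ^ d = (b * z ^ k + a) ^ d := by
    intro k
    have h1 : (z ^ k) ^ d = 1 := by rw [← pow_mul, mul_comm, pow_mul, hzd, one_pow]
    have h2 : ((a + b * z ^ k) ^ (q - 1)) ^ d = 1 := by
      obtain ⟨c, hc⟩ := Nat.gcd_dvd_right n (q - 1)
      rw [← he] at hc
      rw [hc, ← pow_mul, show e * c * d = n * c by rw [hnde]; ring, pow_mul, hy, one_pow]
    rw [hyq, mul_pow, h1, one_mul, ← Nat.sub_add_cancel hq1.le, pow_succ, mul_pow, h2, one_mul,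
      add_comm]
  have hA : a ^ q ≠ 0 := pow_ne_zero _ ha
  have hB : b ^ q ≠ 0 := pow_ne_zero _ hb
  have hAB : a ^ q + b ^ q = 1 := by rw [← hfrob, hab, one_pow]
  have hne : a ^ q * a ≠ b ^ q * b := by
    intro h
    have h1 : b = a ^ q := by linear_combination a ^ q * hab - b * hAB - h
    apply hnotF
    rw [← hk₀, hfrob, mul_pow, mul_pow, hfrob2, h1, hfrob2, add_comm]
  obtain ⟨hd4, s, hs, hds⟩ := exists_eq_prime_pow_add_one hp hpd hd3 fun i hi hid => by
    by_contra! hcon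
    rw [← CharP.cast_eq_zero_iff E p, ← CharP.cast_eq_zero_iff E p] at hcon
    exact hne (mul_eq_mul_of_choose_ne_zero hA hB hd.symm hmap hi hid hcon.1 hcon.2)
  have hdE : (d : E) ≠ 0 := fun h => hpd ((CharP.cast_eq_zero_iff E p d).mp h)
  have hc₁ := choose_mul_sub_eq_zero hd.symm hmap one_pos (by omega)
  have hc₂ := choose_mul_sub_eq_zero hd.symm hmap (i := p ^ s) (by omega) (by omega)
  rw [hds, Nat.add_sub_cancel, Nat.choose_one_right, ← hds, pow_one, pow_one] at hc₁
  rw [hds, Nat.add_sub_cancel_left, Nat.choose_succ_self_right, ← hds, pow_one, pow_one] at hc₂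
  obtain ⟨hAs, hBs⟩ := eq_pow_of_mul_pow_eq hAB hab hne
    (sub_eq_zero.mp ((mul_eq_zero.mp hc₁).resolve_left hdE))
    (sub_eq_zero.mp ((mul_eq_zero.mp hc₂).resolve_left hdE))
  obtain ⟨t, ht, hrt⟩ := exists_odd_mul_of_pow_add_one_dvd hp.one_lt hs (hds ▸ hq ▸ hdq)
  have hqt : q = (p ^ s) ^ t := by rw [hq, hrt, pow_mul]
  have hfix : ∀ x : E, x ^ q = x ^ p ^ s → (x ^ p ^ s) ^ p ^ s = x := by
    intro x hx
    rw [← hx, ← pow_mul, mul_comm, pow_mul, ← hx, hfrob2]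
  have hps : 2 ≤ p ^ s := by omega
  have hye : ∀ k : ℕ, ((a + b * z ^ k) ^ (p ^ s + 1)) ^ e.gcd (p ^ s - 1) = 1 := by
    intro k
    have hy0 : a + b * z ^ k ≠ 0 := fun h0 => by
      simpa [h0, hn0.ne'] using hy k
    have h1 : (((a + b * z ^ k) ^ (p ^ s + 1)) ^ (p ^ s - 1)) = 1 := by
      have hv : (z ^ k) ^ p ^ s * z ^ k = 1 := by
        rw [← pow_succ, ← pow_mul, mul_comm, pow_mul, ← hds, hzd, one_pow]
      have hv0 : (z ^ k) ^ p ^ s ≠ 0 := left_ne_zero_of_mul_eq_one hv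
      have hv2 : ((z ^ k) ^ p ^ s) ^ p ^ s = z ^ k := by
        refine mul_right_cancel₀ hv0 ?_
        rw [← mul_pow, hv, one_pow, mul_comm, hv]
      have hyy : ((a + b * z ^ k) ^ p ^ s) ^ p ^ s = a + b * z ^ k := by
        rw [add_pow_char_pow, add_pow_char_pow, mul_pow, mul_pow, hfix a hAs, hfix b hBs, hv2]
      refine mul_right_cancel₀ hy0 ?_
      rw [one_mul, ← pow_mul, ← pow_succ]
      have hexp : (p ^ s + 1) * (p ^ s - 1) + 1 = p ^ s * p ^ s := by
        obtain ⟨c, hc⟩ : ∃ c, p ^ s = c + 1 := ⟨p ^ s - 1, by omega⟩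
        rw [hc, Nat.add_sub_cancel]
        ring
      rw [hexp, pow_mul, hyy]
    have h2 : ((a + b * z ^ k) ^ (p ^ s + 1)) ^ n = 1 := by
      rw [pow_right_comm, hy, one_pow]
    have h3 : p ^ s - 1 ∣ q - 1 := by
      simpa [hqt] using Nat.sub_dvd_pow_sub_pow (p ^ s) 1 t
    rw [← orderOf_dvd_iff_pow_eq_one] at h1 h2 ⊢
    exact Nat.dvd_gcd (Nat.dvd_gcd h2 (h1.trans h3)) h1
  have hgcd := eq_sub_one_of_norm_pow_eq_one hs ha hb (hd.symm.trans hds)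
    (Nat.gcd_dvd_right _ _) hye
  obtain ⟨f, hf⟩ : p ^ s - 1 ∣ e := hgcd ▸ Nat.gcd_dvd_left _ _
  have hps0 : 0 < p ^ s - 1 := by omega
  refine ⟨hd4, p ^ s, t, hp.prime.isPrimePow.pow hs.ne', ht, hqt, hds, ?_, ?_⟩
  · rw [hnd]
    exact ⟨f, hf⟩
  · have hf0 : 0 < f := Nat.pos_of_mul_pos_left (hf ▸ he0)
    rw [hnd, hf, Nat.mul_div_cancel_left _ hps0, orderOf_pow_of_dvd hf0.ne', ← hn, hnde, hf,
      ← mul_assoc, Nat.mul_div_cancel _ hf0, hds]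
    · simpa using (Nat.sq_sub_sq (p ^ s) 1).symm
    · rw [← hn, hnde, hf, ← mul_assoc]
      exact dvd_mul_left _ _
end
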